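/- arXiv:0811.3576 — 2 statements merged into one kernel-verified Lean document; each statement's English description precedes it below -/
import Mathlib

section
/- Every infinite semigroup X that is right cancellative (xz = yz implies x = y) and weakly left cancellative (for all x, b ∈ X the set {z ∈ X | xz = b} is finite) satisfies properties (1) and (2), and is therefore ambitable: there exists f : X → [0,1] whose right orbit {z ↦ f(zx) | x ∈ X} is dense in [0,1]^X. -/
/-! A pattern is a finite set `F ⊆ X` together with a map `F → X`; an infinite `X` has only `#X`
patterns. Well-order them in order type `(#X).ord` and choose recursively, for each pattern on `F`,
an element `x` such that the elements `z * x`, `z ∈ F`, are distinct and differ from all products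
used before: property (2) makes the set of `x` violating the last condition smaller than `X`, and
property (1) leaves `#X` candidates. As all the products are distinct, one map `X → X` can be
prescribed on them so that every pattern appears on a right translate. Composing it with a map of
dense range from `X` to the target gives a dense right orbit. -/

open Cardinal Set

universe u

theorem exists_forall_of_forall_initialSegment {ι X : Type*} {r : ι → ι → Prop}
    (hr : WellFounded r) {p : ∀ t : ι, ({s // r s t} → X) → X → Prop}
    (h : ∀ t g, ∃ x, p t g x) :
    ∃ g : ι → X, ∀ t, p t (fun s => g s) (g t) := by
  choose F hF using h
  refine ⟨hr.fix fun t g => F t fun s => g s s.2, fun t => ?_⟩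
  rw [hr.fix_eq]
  exact hF t _

section Cardinality

theorem mk_iUnion_lt_of_finite {ι X : Type u} {c : Cardinal.{u}} (hc : ℵ₀ ≤ c) (hι : #ι < c)
    {A : ι → Set X} (hA : ∀ i, (A i).Finite) : #(⋃ i, A i) < c := by
  rcases finite_or_infinite ι with _ | _
  · exact (finite_iUnion hA).lt_aleph0.trans_le hc
  · calc #(⋃ i, A i) ≤ #ι * ⨆ i, #(A i) := mk_iUnion_le A
      _ ≤ #ι * ℵ₀ := by gcongr; exact ciSup_le' fun i => (hA i).lt_aleph0.le
      _ = #ι := mul_aleph0_eq (aleph0_le_mk ι)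
      _ < c := hι

theorem mk_biUnion_finset_lt {ι : Type*} {X : Type u} {c : Cardinal.{u}} (hc : ℵ₀ ≤ c)
    (F : Finset ι) {A : ι → Set X} (hA : ∀ i ∈ F, #(A i) < c) : #(⋃ i ∈ F, A i : Set X) < c := by
  classical
  induction F using Finset.induction_on with
  | empty => simpa using aleph0_pos.trans_le hc
  | insert a F _ ih =>
    rw [Finset.forall_mem_insert] at hA
    rw [Finset.set_biUnion_insert]
    exact (mk_union_le _ _).trans_lt (add_lt_of_lt hc hA.1 (ih hA.2))

theorem mk_preimage_lt_of_finite_fibers {X Y : Type u} {c : Cardinal.{u}} (hc : ℵ₀ ≤ c)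
    {φ : X → Y} (hφ : ∀ b, (φ ⁻¹' {b}).Finite) {P : Set Y} (hP : #P < c) :
    #(φ ⁻¹' P) < c := by
  rw [← biUnion_preimage_singleton, biUnion_eq_iUnion]
  exact mk_iUnion_lt_of_finite hc hP fun b => hφ b

theorem mk_sigma_finset_fun_le (X : Type u) [Infinite X] : #(Σ F : Finset X, F → X) ≤ #X :=
  calc #(Σ F : Finset X, F → X) = sum fun F : Finset X => #(F → X) := mk_sigma _
    _ ≤ #(Finset X) * ⨆ F : Finset X, #(F → X) := sum_le_mk_mul_iSup _
    _ ≤ #X * #X := by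
      gcongr
      · exact (mk_finset_of_infinite X).le
      · refine ciSup_le' fun F => ?_
        simpa using power_nat_le (aleph0_le_mk X)
    _ = #X := mul_eq_self (aleph0_le_mk X)

end Cardinality

theorem exists_denseRange_of_infinite (X : Type*) {Y : Type*} [Infinite X] [TopologicalSpace Y]
    [TopologicalSpace.SeparableSpace Y] [Nonempty Y] : ∃ d : X → Y, DenseRange d := by
  have hsurj := Function.invFun_surjective (Infinite.natEmbedding X).injective
  exact ⟨_, (TopologicalSpace.denseRange_denseSeq Y).comp hsurj.denseRange
    continuous_of_discreteTopology⟩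

/-- Property (1): for every finite set `F` there are as many elements of `X` whose right
translation is injective on `F` as there are elements of `X`. -/
def HasManySeparators (X : Type*) [Mul X] : Prop :=
  ∀ F : Finset X, #{z : X | ∀ x ∈ F, ∀ y ∈ F, x ≠ y → x * z ≠ y * z} = #X

/-- Property (2): preimages under left translations of sets smaller than `X` are smaller
than `X`. -/
def HasSmallPreimages (X : Type*) [Mul X] : Prop :=
  ∀ P : Set X, #P < #X → ∀ x : X, #{z : X | x * z ∈ P} < #X

section Mul

variable {X : Type u} [Mul X]

theorem hasManySeparators_of_isRightCancelMul [IsRightCancelMul X] : HasManySeparators X := by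
  intro F
  have h_univ : {z : X | ∀ x ∈ F, ∀ y ∈ F, x ≠ y → x * z ≠ y * z} = Set.univ :=
    eq_univ_of_forall fun z _ _ _ _ hxy => (mul_left_injective z).ne hxy
  rw [h_univ, mk_univ]

variable [Infinite X]

theorem hasSmallPreimages_of_finite_fibers (h : ∀ x b : X, {z : X | x * z = b}.Finite) :
    HasSmallPreimages X :=
  fun _ hP x => mk_preimage_lt_of_finite_fibers (aleph0_le_mk X) (h x) hP

theorem exists_injOn_mul_right_notMem (h₁ : HasManySeparators X) (h₂ : HasSmallPreimages X)
    (F : Finset X) {P : Set X} (hP : #P < #X) :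
    ∃ x, InjOn (· * x) (F : Set X) ∧ ∀ z ∈ F, z * x ∉ P := by
  have h_bad : #(⋃ z ∈ F, {x : X | z * x ∈ P} : Set X) < #X :=
    mk_biUnion_finset_lt (aleph0_le_mk X) F fun z _ => h₂ P hP z
  rw [← h₁ F] at h_bad
  obtain ⟨x, hx_sep, hx_bad⟩ := sdiff_nonempty_of_mk_lt_mk h_bad
  refine ⟨x, fun y hy z hz => not_imp_not.1 (hx_sep y hy z hz), fun z hz hzx => hx_bad ?_⟩
  exact mem_biUnion (Finset.mem_coe.2 hz) hzx

theorem exists_injective_sigma_mul (h₁ : HasManySeparators X) (h₂ : HasSmallPreimages X)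
    {ι : Type u} (hι : #ι ≤ #X) (F : ι → Finset X) :
    ∃ g : ι → X, Function.Injective fun p : Σ i, F i => (p.2 : X) * g p.1 := by
  obtain ⟨r, _, hr⟩ := exists_ord_eq ι
  have h_used (t : ι) (g : {s // r s t} → X) :
      #(⋃ s, (· * g s) '' (F s : Set X) : Set X) < #X :=
    mk_iUnion_lt_of_finite (aleph0_le_mk X) ((card_typein_lt t hr).trans_le hι)
      fun s => (F s).finite_toSet.image _
  obtain ⟨g, hg⟩ := exists_forall_of_forall_initialSegment (IsWellFounded.wf (r := r))
    fun t g => exists_injOn_mul_right_notMem h₁ h₂ (F t) (h_used t g)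
  have h_disjoint {s t : ι} (hst : r s t) (w : F s) (z : F t) : (w : X) * g s ≠ z * g t :=
    fun h => (hg t).2 z z.2 (mem_iUnion.2 ⟨⟨s, hst⟩, w, w.2, h⟩)
  refine ⟨g, ?_⟩
  rintro ⟨s, w⟩ ⟨t, z⟩ h
  rcases trichotomous_of r s t with hst | rfl | hts
  · exact absurd h (h_disjoint hst w z)
  · rw [Subtype.ext ((hg s).1 w.2 z.2 h)]
  · exact absurd h.symm (h_disjoint hts z w)

theorem exists_forall_finset_exists_mul_right_eq (h₁ : HasManySeparators X)
    (h₂ : HasSmallPreimages X) :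
    ∃ f : X → X, ∀ (F : Finset X) (u : X → X), ∃ x, ∀ z ∈ F, f (z * x) = u z := by
  obtain ⟨g, hg⟩ := exists_injective_sigma_mul h₁ h₂ (mk_sigma_finset_fun_le X) Sigma.fst
  let product (p : Σ i : (Σ F : Finset X, F → X), i.1) : X := p.2 * g p.1
  let value (p : Σ i : (Σ F : Finset X, F → X), i.1) : X := p.1.2 p.2
  refine ⟨Function.extend product value id, fun F u => ?_⟩
  let pattern : Σ F : Finset X, F → X := ⟨F, fun z => u z⟩
  exact ⟨g pattern, fun z hz => hg.extend_apply value id ⟨pattern, ⟨z, hz⟩⟩⟩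

theorem exists_dense_range_mul_right (h₁ : HasManySeparators X) (h₂ : HasSmallPreimages X)
    {Y : Type*} [TopologicalSpace Y] {d : X → Y} (hd : DenseRange d) :
    ∃ f : X → Y, Dense (range fun x : X => fun z : X => f (z * x)) := by
  obtain ⟨f, hf⟩ := exists_forall_finset_exists_mul_right_eq h₁ h₂
  refine ⟨d ∘ f, dense_iff_inter_open.2 fun U hU hU_nonempty => ?_⟩
  obtain ⟨u, hu⟩ := (DenseRange.piMap fun _ : X => hd).exists_mem_open hU hU_nonempty
  obtain ⟨F, V, hV, hVU⟩ := isOpen_pi_iff.1 hU _ hu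
  obtain ⟨x, hx⟩ := hf F u
  refine ⟨_, hVU fun z hz => ?_, x, rfl⟩
  change d (f (z * x)) ∈ V z
  rw [hx z hz]
  exact (hV z hz).2

theorem stmt3_general [IsRightCancelMul X] (hwlc : ∀ x b : X, {z : X | x * z = b}.Finite)
    {Y : Type*} [TopologicalSpace Y] {d : X → Y} (hd : DenseRange d) :
    HasManySeparators X ∧ HasSmallPreimages X ∧
      ∃ f : X → Y, Dense (range fun x : X => fun z : X => f (z * x)) :=
  have h₁ : HasManySeparators X := hasManySeparators_of_isRightCancelMul
  have h₂ : HasSmallPreimages X := hasSmallPreimages_of_finite_fibers hwlc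
  ⟨h₁, h₂, exists_dense_range_mul_right h₁ h₂ hd⟩

end Mul

/-- Every infinite right cancellative, weakly left cancellative semigroup satisfies
properties (1) and (2), and is therefore ambitable. -/
theorem stmt3 {X : Type*} [Semigroup X] [Infinite X]
    (hrc : ∀ x y z : X, x * z = y * z → x = y)
    (hwlc : ∀ x b : X, {z : X | x * z = b}.Finite) :
    (∀ F : Finset X,
      #{z : X | ∀ x ∈ F, ∀ y ∈ F, x ≠ y → x * z ≠ y * z} = #X) ∧
    (∀ P : Set X, #↥P < #X → ∀ x : X, #{z : X | x * z ∈ P} < #X) ∧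
    ∃ f : X → Set.Icc (0 : ℝ) 1,
      Dense (Set.range fun x : X => fun z : X => f (z * x)) := by
  have : IsRightCancelMul X := ⟨fun z x y => hrc x y z⟩
  exact stmt3_general hwlc (exists_denseRange_of_infinite X).choose_spec
end

section
/- Let X be a semigroup with the discrete topology. If μ, ν ∈ K, then μ⋆ν ∈ K; that is, the weak* closure K of the evaluation functionals is closed under convolution. -/
open BoundedContinuousFunction NormedSpace

section ConvDefs

variable {X Y Z : Type*} [TopologicalSpace X] [DiscreteTopology X]
  [TopologicalSpace Y] [DiscreteTopology Y] [TopologicalSpace Z] [DiscreteTopology Z]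

/-- The inner integral: `x ↦ ν (y ↦ f (p x y))`, as a bounded function on `X`. -/
noncomputable def innerConv (p : X → Y → Z) (ν : StrongDual ℝ (Y →ᵇ ℝ)) (f : Z →ᵇ ℝ) : X →ᵇ ℝ :=
  BoundedContinuousFunction.ofNormedAddCommGroup
    (fun x => ν (f.compContinuous ⟨fun y => p x y, continuous_of_discreteTopology⟩))
    continuous_of_discreteTopology (‖ν‖ * ‖f‖)
    (fun x => by
      calc ‖ν (f.compContinuous ⟨fun y => p x y, continuous_of_discreteTopology⟩)‖
          ≤ ‖ν‖ * ‖f.compContinuous ⟨fun y => p x y, continuous_of_discreteTopology⟩‖ :=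
            ν.le_opNorm _
        _ ≤ ‖ν‖ * ‖f‖ := by
            gcongr
            exact f.norm_compContinuous_le _)

/-- The convolution `μ ⋆ ν` along the map `p`:
`(μ ⋆ ν) f = μ (x ↦ ν (y ↦ f (p x y)))`. -/
noncomputable def convMap (p : X → Y → Z) (μ : StrongDual ℝ (X →ᵇ ℝ)) (ν : StrongDual ℝ (Y →ᵇ ℝ)) :
    StrongDual ℝ (Z →ᵇ ℝ) :=
  LinearMap.mkContinuous
    { toFun := fun f => μ (innerConv p ν f)
      map_add' := fun f g => by
        rw [← map_add]
        refine congrArg μ ?_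
        ext x
        simp only [innerConv, coe_ofNormedAddCommGroup, coe_add, Pi.add_apply]
        exact map_add ν (f.compContinuous _) (g.compContinuous _)
      map_smul' := fun c f => by
        simp only [RingHom.id_apply]
        rw [← map_smul]
        refine congrArg μ ?_
        ext x
        simp only [innerConv, coe_ofNormedAddCommGroup, coe_smul, Pi.smul_apply]
        exact map_smul ν c (f.compContinuous _) }
    (‖μ‖ * ‖ν‖)
    (fun f => by
      calc ‖μ (innerConv p ν f)‖ ≤ ‖μ‖ * ‖innerConv p ν f‖ := μ.le_opNorm _
        _ ≤ ‖μ‖ * (‖ν‖ * ‖f‖) := by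
            gcongr
            exact norm_ofNormedAddCommGroup_le _
                (mul_nonneg (norm_nonneg ν) (norm_nonneg f)) _
        _ = ‖μ‖ * ‖ν‖ * ‖f‖ := by ring)

/-- `μ` is representable by an absolutely summable family (an element of `ℓ¹(X)`). -/
def L1Rep (μ : StrongDual ℝ (X →ᵇ ℝ)) : Prop :=
  ∃ g : X → ℝ, Summable (fun x => |g x|) ∧ ∀ f : X →ᵇ ℝ, μ f = ∑' x, g x * f x

/-- A functional is positive if it is nonnegative on nonnegative functions. -/
def PosFunc (μ : StrongDual ℝ (X →ᵇ ℝ)) : Prop :=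
  ∀ f : X →ᵇ ℝ, (∀ x, 0 ≤ f x) → 0 ≤ μ f

end ConvDefs

/-!
For fixed `ν` the map `μ ↦ μ ⋆ ν` is always weak* continuous, which reduces the claim to `μ = δ_x`.
The map `ν ↦ μ ⋆ ν` need not be weak* continuous for general `μ`, but it is for `μ = δ_x`, because
`(δ_x ⋆ ν) f` is `ν` evaluated at the single function `y ↦ f (p x y)`. Hence the order of the two
limits matters, and the second one reduces the claim to `δ_x ⋆ δ_y = δ_{p x y}`.
-/

section PointEvaluation

variable {X : Type*} [TopologicalSpace X]

/-- The weak* closure of the point evaluations `δ_x` in the dual of the bounded continuous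
functions. For discrete `X` this is the uniform compactification `K`; for general `X` it is defined
with bounded continuous rather than bounded uniformly continuous functions. -/
def evalClosure (X : Type*) [TopologicalSpace X] : Set (WeakDual ℝ (X →ᵇ ℝ)) :=
  closure (Set.range fun x : X => StrongDual.toWeakDual (evalCLM ℝ x))

theorem isClosed_evalClosure : IsClosed (evalClosure X) :=
  isClosed_closure

theorem toWeakDual_evalCLM_mem_evalClosure (x : X) :
    StrongDual.toWeakDual (evalCLM ℝ x) ∈ evalClosure X :=
  subset_closure (Set.mem_range_self x)

theorem mapsTo_evalClosure {E : Type*} [TopologicalSpace E] {F : WeakDual ℝ (X →ᵇ ℝ) → E}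
    {t : Set E} (hF : Continuous F) (ht : IsClosed t)
    (h : ∀ x : X, F (StrongDual.toWeakDual (evalCLM ℝ x)) ∈ t) :
    Set.MapsTo F (evalClosure X) t :=
  Set.MapsTo.closure_left (Set.forall_mem_range.2 h) hF ht

end PointEvaluation

section Convolution

variable {X Y Z : Type*} [TopologicalSpace X] [DiscreteTopology X]
  [TopologicalSpace Y] [DiscreteTopology Y] [TopologicalSpace Z]

theorem convMap_apply (p : X → Y → Z) (μ : StrongDual ℝ (X →ᵇ ℝ)) (ν : StrongDual ℝ (Y →ᵇ ℝ))
    (f : Z →ᵇ ℝ) : convMap p μ ν f = μ (innerConv p ν f) :=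
  rfl

theorem convMap_evalCLM_left_apply (p : X → Y → Z) (x : X) (ν : StrongDual ℝ (Y →ᵇ ℝ))
    (f : Z →ᵇ ℝ) :
    convMap p (evalCLM ℝ x) ν f = ν (f.compContinuous ⟨p x, continuous_of_discreteTopology⟩) :=
  rfl

theorem convMap_evalCLM_evalCLM (p : X → Y → Z) (x : X) (y : Y) :
    convMap p (evalCLM ℝ x) (evalCLM ℝ y) = evalCLM ℝ (p x y) :=
  rfl

theorem continuous_convMap_left (p : X → Y → Z) (ν : StrongDual ℝ (Y →ᵇ ℝ)) :
    Continuous fun μ : WeakDual ℝ (X →ᵇ ℝ) =>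
      StrongDual.toWeakDual (convMap p (WeakDual.toStrongDual μ) ν) := by
  refine WeakDual.continuous_of_continuous_eval fun f => ?_
  simp only [StrongDual.toWeakDual_apply, convMap_apply, WeakDual.toStrongDual_apply]
  exact WeakDual.eval_continuous (innerConv p ν f)

theorem continuous_convMap_evalCLM_right (p : X → Y → Z) (x : X) :
    Continuous fun ν : WeakDual ℝ (Y →ᵇ ℝ) =>
      StrongDual.toWeakDual (convMap p (evalCLM ℝ x) (WeakDual.toStrongDual ν)) := by
  refine WeakDual.continuous_of_continuous_eval fun f => ?_
  simp only [StrongDual.toWeakDual_apply, convMap_evalCLM_left_apply, WeakDual.toStrongDual_apply]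
  exact WeakDual.eval_continuous (f.compContinuous ⟨p x, continuous_of_discreteTopology⟩)

theorem convMap_evalCLM_left_mem_evalClosure (p : X → Y → Z) (x : X) {ν : WeakDual ℝ (Y →ᵇ ℝ)}
    (hν : ν ∈ evalClosure Y) :
    StrongDual.toWeakDual (convMap p (evalCLM ℝ x) (WeakDual.toStrongDual ν)) ∈ evalClosure Z := by
  refine mapsTo_evalClosure (continuous_convMap_evalCLM_right p x) isClosed_evalClosure
    (fun y => ?_) hν
  rw [StrongDual.toStrongDual_toWeakDual, convMap_evalCLM_evalCLM]
  exact toWeakDual_evalCLM_mem_evalClosure (p x y)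

theorem stmt14_general (p : X → Y → Z) {μ : WeakDual ℝ (X →ᵇ ℝ)} {ν : WeakDual ℝ (Y →ᵇ ℝ)}
    (hμ : μ ∈ evalClosure X) (hν : ν ∈ evalClosure Y) :
    StrongDual.toWeakDual (convMap p (WeakDual.toStrongDual μ) (WeakDual.toStrongDual ν)) ∈
      evalClosure Z :=
  mapsTo_evalClosure (continuous_convMap_left p (WeakDual.toStrongDual ν)) isClosed_evalClosure
    (fun x => convMap_evalCLM_left_mem_evalClosure p x hν) hμ

end Convolution

/-- The uniform compactification `K` is closed under convolution. -/
theorem stmt14 {X : Type*} [Semigroup X] [TopologicalSpace X] [DiscreteTopology X]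
    (μ ν : WeakDual ℝ (X →ᵇ ℝ))
    (hμ : μ ∈ closure (Set.range fun x : X => StrongDual.toWeakDual (evalCLM ℝ x)))
    (hν : ν ∈ closure (Set.range fun x : X => StrongDual.toWeakDual (evalCLM ℝ x))) :
    StrongDual.toWeakDual (convMap (· * ·) (WeakDual.toStrongDual μ) (WeakDual.toStrongDual ν)) ∈
      closure (Set.range fun x : X => StrongDual.toWeakDual (evalCLM ℝ x)) :=
  stmt14_general (· * ·) hμ hν
end
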